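/- arXiv:1207.3739 — 2 statements merged into one kernel-verified Lean document; each statement's English description precedes it below -/
import Mathlib

section
/- Let A be an n-dimensional cyclic left Leibniz algebra generated by a with characteristic polynomial p(x) = p₁(x)^{n₁}···p_s(x)^{n_s} of L_a, p₁(x) = x. Then A has a unique maximal ideal, namely M₁ = {b ∈ A : t(L_a)(b) = 0} where t(x) = p(x)/x^{n₁}·x^{n₁−1}... specifically t(x) = p(x)/p₁(x). -/
open Polynomial LinearMap

/-- A (left) Leibniz algebra structure on the `K`-vector space `A`:
a bilinear multiplication satisfying `x(yz) = (xy)z + y(xz)`. -/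
structure LeibnizMul (K A : Type*) [Field K] [AddCommGroup A] [Module K A] where
  mul : A →ₗ[K] A →ₗ[K] A
  leibniz : ∀ x y z, mul x (mul y z) = mul (mul x y) z + mul y (mul x z)

namespace LeibnizMul

variable {K A : Type*} [Field K] [AddCommGroup A] [Module K A]

/-- The product of two subspaces: the span of all products `s·t`, `s ∈ S`, `t ∈ T`. -/
def mulSub (m : LeibnizMul K A) (S T : Submodule K A) : Submodule K A :=
  Submodule.span K (Set.image2 (fun x y => m.mul x y) (S : Set A) (T : Set A))

/-- Relative lower central series of the subalgebra `S`: `lcsIn m S n = S^(n+1)`,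
i.e. `lcsIn m S 0 = S` and `lcsIn m S (n+1) = S · (lcsIn m S n)`. -/
def lcsIn (m : LeibnizMul K A) (S : Submodule K A) : ℕ → Submodule K A
  | 0 => S
  | (n+1) => m.mulSub S (m.lcsIn S n)

/-- `A` is nilpotent: some term of the lower central series vanishes. -/
def IsNilpotent (m : LeibnizMul K A) : Prop := ∃ n, m.lcsIn ⊤ n = ⊥

/-- `S` is a subalgebra: a subspace closed under multiplication. -/
def IsSubalg (m : LeibnizMul K A) (S : Submodule K A) : Prop :=
  ∀ x ∈ S, ∀ y ∈ S, m.mul x y ∈ S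

/-- `S` is a (two-sided) ideal. -/
def IsIdeal (m : LeibnizMul K A) (S : Submodule K A) : Prop :=
  ∀ (x : A), ∀ y ∈ S, m.mul x y ∈ S ∧ m.mul y x ∈ S

/-- `M` is a maximal (proper) subalgebra. -/
def IsMaxSubalg (m : LeibnizMul K A) (M : Submodule K A) : Prop :=
  m.IsSubalg M ∧ M ≠ ⊤ ∧ ∀ S, m.IsSubalg S → M < S → S = ⊤

/-- The Frattini subalgebra: the intersection of all maximal subalgebras. -/
def frattini (m : LeibnizMul K A) : Submodule K A :=
  sInf {M | m.IsMaxSubalg M}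

/-- The subalgebra generated by a single element `a`. -/
def subalgGen (m : LeibnizMul K A) (a : A) : Submodule K A :=
  sInf {S | m.IsSubalg S ∧ a ∈ S}

/-- The normal closure of a subspace: the smallest ideal containing it. -/
def normalClosure (m : LeibnizMul K A) (S : Submodule K A) : Submodule K A :=
  sInf {I | m.IsIdeal I ∧ S ≤ I}

/-- The normalizer of a subspace `C`: all `x` with `x·c ∈ C` and `c·x ∈ C` for all `c ∈ C`. -/
def normalizer (m : LeibnizMul K A) (C : Submodule K A) : Submodule K A :=
  ⨅ c : C, (Submodule.comap (m.mul.flip (c : A)) C ⊓ Submodule.comap (m.mul (c : A)) C)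

/-- The center of the subalgebra `S`: all `z ∈ S` with `z·x = x·z = 0` for all `x ∈ S`. -/
def centerIn (m : LeibnizMul K A) (S : Submodule K A) : Submodule K A :=
  S ⊓ ⨅ x : S, (LinearMap.ker (m.mul.flip (x : A)) ⊓ LinearMap.ker (m.mul (x : A)))

/-- All `z ∈ S` with `z·x ∈ T` and `x·z ∈ T` for all `x ∈ S`. -/
def relCentralizer (m : LeibnizMul K A) (S T : Submodule K A) : Submodule K A :=
  S ⊓ ⨅ x : S, (Submodule.comap (m.mul.flip (x : A)) T ⊓ Submodule.comap (m.mul (x : A)) T)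

/-- The upper central series of the subalgebra `S`:
`Z₀ = 0`, `Z_{j+1} = {z ∈ S : zS ⊆ Z_j and Sz ⊆ Z_j}`. -/
def ucsIn (m : LeibnizMul K A) (S : Submodule K A) : ℕ → Submodule K A
  | 0 => ⊥
  | (j+1) => m.relCentralizer S (m.ucsIn S j)

/-- The right center `{r : A·r = 0}`. -/
def rightCenter (m : LeibnizMul K A) : Submodule K A := LinearMap.ker m.mul.flip

/-- Left-normed powers of `a`: `lpow m a k = a^(k+1)`. -/
def lpow (m : LeibnizMul K A) (a : A) : ℕ → A
  | 0 => a
  | (k+1) => m.mul a (m.lpow a k)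

/-- The Fitting null component of left multiplication by `a`. -/
def fittingNull (m : LeibnizMul K A) (a : A) : Submodule K A :=
  ⨆ k, LinearMap.ker ((m.mul a) ^ k)

end LeibnizMul

/-!
In a cyclic Leibniz algebra every left multiplication is a multiple of `L_a`, so products act by
zero from the left, and `a` is a cyclic vector for the operator `L_a`. Hence `A = K a + L_a(A)`
with `L_a(A)` an ideal. An ideal containing some `c a + a y` with `c ≠ 0` contains
`c a z = (c a + a y) z` for all `z`, hence `L_a(A)`, hence `a`. So every proper ideal lies in
`L_a(A)`. Finally, `A ≅ K[X] ⧸ (p)` as `K[X]`-modules, where `p` is the characteristic polynomial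
of `L_a`; there the kernel of multiplication by `t = p / X` is the image of multiplication by `X`,
that is, `L_a(A)`.
-/

section LinearAlgebra

variable {R V : Type*} [CommRing R] [AddCommGroup V] [Module R V]

section Charpoly

variable [Nontrivial R] [Module.Free R V] [Module.Finite R V]

theorem nontrivial_of_X_dvd_charpoly {f : V →ₗ[R] V} (hX : X ∣ f.charpoly) : Nontrivial V := by
  by_contra hV
  rw [not_nontrivial_iff_subsingleton] at hV
  have hone : f.charpoly = 1 := f.charpoly_monic.natDegree_eq_zero.mp <| by
    rw [f.charpoly_natDegree, Module.finrank_zero_of_subsingleton]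
  exact not_isUnit_X (isUnit_of_dvd_one (hone ▸ hX))

theorem degree_modByMonic_charpoly_lt (f : V →ₗ[R] V) (q : R[X]) :
    (q %ₘ f.charpoly).degree < Module.finrank R V := by
  rw [← f.charpoly_natDegree, ← degree_eq_natDegree f.charpoly_monic.ne_zero]
  exact degree_modByMonic_lt q f.charpoly_monic

end Charpoly

/-- `v` is a cyclic vector of the endomorphism `f`: it generates `V` as a module over `R[X]`, with
`X` acting as `f`. -/
def IsCyclicVector (f : V →ₗ[R] V) (v : V) : Prop :=
  Function.Surjective fun q : R[X] => aeval f q v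

namespace IsCyclicVector

variable {f : V →ₗ[R] V} {v : V}

theorem exists_eq_smul_add (hv : IsCyclicVector f v) (x : V) : ∃ c : R, ∃ y, x = c • v + f y := by
  obtain ⟨q, rfl⟩ := hv x
  refine ⟨q.coeff 0, aeval f q.divX v, ?_⟩
  calc aeval f q v = aeval f (X * q.divX + C (q.coeff 0)) v := by rw [X_mul_divX_add]
    _ = q.coeff 0 • v + f (aeval f q.divX v) := by
      simp [-X_mul_divX_add, Module.algebraMap_end_apply, add_comm]

variable [Nontrivial R] [Module.Free R V] [Module.Finite R V]

theorem exists_degree_lt_finrank (hv : IsCyclicVector f v) (x : V) :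
    ∃ q : R[X], q.degree < Module.finrank R V ∧ aeval f q v = x := by
  obtain ⟨q, rfl⟩ := hv x
  exact ⟨q %ₘ f.charpoly, degree_modByMonic_charpoly_lt f q, by
    rw [← f.aeval_eq_aeval_mod_charpoly]⟩

theorem eq_zero_of_degree_lt_finrank (hv : IsCyclicVector f v) {q : R[X]}
    (hdeg : q.degree < Module.finrank R V) (hq : aeval f q v = 0) : q = 0 := by
  let n := Module.finrank R V
  let evalAt : degreeLT R n →ₗ[R] V :=
    (LinearMap.applyₗ v).comp ((aeval f).toLinearMap.comp (degreeLT R n).subtype)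
  have hsurj : Function.Surjective evalAt := fun x => by
    obtain ⟨r, hr, rfl⟩ := hv.exists_degree_lt_finrank x
    exact ⟨⟨r, mem_degreeLT.mpr hr⟩, rfl⟩
  let equiv : degreeLT R n ≃ₗ[R] V :=
    (degreeLTEquiv R n).trans (Module.finBasis R V).equivFun.symm
  have hinj : Function.Injective evalAt :=
    OrzechProperty.injective_of_surjective_of_injective equiv.toLinearMap evalAt
      equiv.injective hsurj
  have hzero : (⟨q, mem_degreeLT.mpr hdeg⟩ : degreeLT R n) = 0 := hinj (by simpa [evalAt] using hq)
  exact congrArg Subtype.val hzero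

theorem charpoly_dvd_iff (hv : IsCyclicVector f v) {q : R[X]} :
    f.charpoly ∣ q ↔ aeval f q v = 0 := by
  constructor
  · rintro ⟨r, rfl⟩
    simp [f.aeval_self_charpoly]
  · intro hq
    rw [← modByMonic_eq_zero_iff_dvd f.charpoly_monic]
    exact hv.eq_zero_of_degree_lt_finrank (degree_modByMonic_charpoly_lt f q)
      (by rwa [← f.aeval_eq_aeval_mod_charpoly])

theorem ker_aeval_eq_range_aeval (hv : IsCyclicVector f v) {t r : R[X]}
    (htr : t * r = f.charpoly) : ker (aeval f t) = range (aeval f r) := by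
  have htreg : IsRegular t := IsRegular.of_mul_left (htr ▸ f.charpoly_monic.isRegular)
  apply le_antisymm
  · intro x hx
    obtain ⟨q, rfl⟩ := hv x
    obtain ⟨u, hu⟩ : t * r ∣ t * q := by
      rw [htr, hv.charpoly_dvd_iff]
      simpa using hx
    have hq : q = r * u := htreg.left (by simpa [mul_assoc] using hu)
    exact ⟨aeval f u v, by simp [hq]⟩
  · rintro _ ⟨x, rfl⟩
    rw [LinearMap.mem_ker, ← Module.End.mul_apply, ← map_mul, htr, f.aeval_self_charpoly,
      LinearMap.zero_apply]

end IsCyclicVector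

end LinearAlgebra

theorem prod_pow_sub_ite_mul {ι M : Type*} [Fintype ι] [DecidableEq ι] [CommMonoid M]
    (p : ι → M) {e : ι → ℕ} {i : ι} (hi : 1 ≤ e i) :
    (∏ k, p k ^ (e k - if k = i then 1 else 0)) * p i = ∏ k, p k ^ e k := by
  have hp : p i = ∏ k, p k ^ (if k = i then 1 else 0) := by simp
  rw [hp, ← Finset.prod_mul_distrib]
  refine Finset.prod_congr rfl fun k _ => ?_
  rw [← pow_add, Nat.sub_add_cancel]
  split_ifs with hk
  · exact hk ▸ hi
  · exact Nat.zero_le _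

namespace LeibnizMul

variable {K A : Type*} [Field K] [AddCommGroup A] [Module K A] {m : LeibnizMul K A} {a : A}
  {I : Submodule K A}

/-- `I` is a maximal ideal: a proper ideal not properly contained in any proper ideal. -/
def IsMaxIdeal (m : LeibnizMul K A) (I : Submodule K A) : Prop :=
  m.IsIdeal I ∧ I ≠ ⊤ ∧ ∀ J, m.IsIdeal J → I < J → J = ⊤

theorem IsIdeal.isSubalg (hI : m.IsIdeal I) : m.IsSubalg I :=
  fun x _ y hy => (hI x y hy).1

theorem IsSubalg.eq_top_of_mem {S : Submodule K A} (hS : m.IsSubalg S)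
    (hcyc : m.subalgGen a = ⊤) (ha : a ∈ S) : S = ⊤ :=
  top_le_iff.mp (hcyc ▸ sInf_le ⟨hS, ha⟩)

theorem mul_mul_eq_lie (m : LeibnizMul K A) (x y : A) :
    m.mul (m.mul x y) = ⁅(m.mul x : Module.End K A), m.mul y⁆ := by
  ext z
  simp [Ring.lie_def, m.leibniz x y z]

theorem mul_mul_eq_zero_of_mem_span {f : A →ₗ[K] A} {x y : A} (hx : m.mul x ∈ K ∙ f)
    (hy : m.mul y ∈ K ∙ f) : m.mul (m.mul x y) = 0 := by
  obtain ⟨c, hc⟩ := Submodule.mem_span_singleton.mp hx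
  obtain ⟨d, hd⟩ := Submodule.mem_span_singleton.mp hy
  have hcomm : Commute (m.mul x : Module.End K A) (m.mul y) :=
    hc ▸ hd ▸ ((Commute.refl (f : Module.End K A)).smul_left c).smul_right d
  rw [mul_mul_eq_lie, hcomm.lie_eq]

theorem mul_mem_span_mul (hcyc : m.subalgGen a = ⊤) (x : A) : m.mul x ∈ K ∙ m.mul a := by
  have hS : m.IsSubalg ((K ∙ m.mul a).comap m.mul) := fun x hx y hy => by
    simp [mul_mul_eq_zero_of_mem_span hx hy]
  have htop := hS.eq_top_of_mem hcyc (Submodule.mem_span_singleton_self _)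
  exact Submodule.mem_comap.mp (htop ▸ Submodule.mem_top)

theorem mul_mul_eq_zero (hcyc : m.subalgGen a = ⊤) (x y : A) : m.mul (m.mul x y) = 0 :=
  mul_mul_eq_zero_of_mem_span (mul_mem_span_mul hcyc x) (mul_mem_span_mul hcyc y)

theorem isCyclicVector_mul (hcyc : m.subalgGen a = ⊤) : IsCyclicVector (m.mul a) a := by
  let S : Submodule K A := range ((LinearMap.applyₗ a).comp (aeval (m.mul a)).toLinearMap)
  have hS : m.IsSubalg S := by
    rintro x - _ ⟨q, rfl⟩
    obtain ⟨c, hc⟩ := Submodule.mem_span_singleton.mp (mul_mem_span_mul hcyc x)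
    exact ⟨c • (X * q), by simp [← hc]⟩
  exact range_eq_top.mp (hS.eq_top_of_mem hcyc ⟨1, by simp⟩)

theorem isIdeal_range_mul (hcyc : m.subalgGen a = ⊤) : m.IsIdeal (range (m.mul a)) := by
  rintro x _ ⟨y, rfl⟩
  obtain ⟨c, hc⟩ := Submodule.mem_span_singleton.mp (mul_mem_span_mul hcyc x)
  refine ⟨⟨c • m.mul a y, by simp [← hc]⟩, ?_⟩
  rw [mul_mul_eq_zero hcyc]
  exact zero_mem _

theorem IsIdeal.le_range_mul (hI : m.IsIdeal I) (hcyc : m.subalgGen a = ⊤) (hne : I ≠ ⊤) :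
    I ≤ range (m.mul a) := by
  intro x hx
  obtain ⟨c, y, rfl⟩ := (isCyclicVector_mul hcyc).exists_eq_smul_add x
  obtain rfl | hc := eq_or_ne c 0
  · simp
  have hrange : ∀ z, m.mul a z ∈ I := fun z => by
    have hz : c • m.mul a z ∈ I := by
      simpa [mul_mul_eq_zero hcyc] using (hI z _ hx).2
    exact (I.smul_mem_iff hc).mp hz
  have ha : a ∈ I := (I.smul_mem_iff hc).mp ((I.add_mem_iff_left (hrange y)).mp hx)
  exact absurd (hI.isSubalg.eq_top_of_mem hcyc ha) hne

theorem range_mul_ne_top [Nontrivial A] (hcyc : m.subalgGen a = ⊤) : range (m.mul a) ≠ ⊤ := by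
  intro htop
  obtain ⟨y, hy⟩ := range_eq_top.mp htop a
  have hzero : m.mul a = 0 := hy ▸ mul_mul_eq_zero hcyc a y
  rw [hzero, range_zero] at htop
  exact bot_ne_top htop

theorem isMaxIdeal_iff_eq_range_mul [Nontrivial A] (hcyc : m.subalgGen a = ⊤) :
    m.IsMaxIdeal I ↔ I = range (m.mul a) := by
  constructor
  · rintro ⟨hI, hne, hmax⟩
    by_contra hrange
    exact range_mul_ne_top hcyc
      (hmax _ (isIdeal_range_mul hcyc) ((hI.le_range_mul hcyc hne).lt_of_ne hrange))
  · rintro rfl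
    refine ⟨isIdeal_range_mul hcyc, range_mul_ne_top hcyc, fun J hJ hlt => ?_⟩
    by_contra hne
    exact hlt.not_ge (hJ.le_range_mul hcyc hne)

end LeibnizMul

theorem stmt15_general {K A : Type*} [Field K] [AddCommGroup A] [Module K A]
    [FiniteDimensional K A] (m : LeibnizMul K A) (a : A) (hcyc : m.subalgGen a = ⊤) (t : K[X])
    (ht : t * X = (m.mul a).charpoly) (I : Submodule K A) :
    m.IsMaxIdeal I ↔ I = ker (aeval (m.mul a) t) := by
  have : Nontrivial A := nontrivial_of_X_dvd_charpoly (ht ▸ dvd_mul_left X t)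
  rw [(LeibnizMul.isCyclicVector_mul hcyc).ker_aeval_eq_range_aeval ht, aeval_X]
  exact LeibnizMul.isMaxIdeal_iff_eq_range_mul hcyc

/-- a cyclic Leibniz algebra has a unique maximal ideal, namely the
kernel of `t(L_a)` where `t = p/p₁` and `p₁ = X`. -/
theorem stmt15 {K A : Type*} [Field K] [AddCommGroup A] [Module K A] [FiniteDimensional K A]
    (m : LeibnizMul K A) (a : A) (hcyc : m.subalgGen a = ⊤)
    (s : ℕ) (hs : 0 < s) (p : Fin s → Polynomial K) (e : Fin s → ℕ)
    (hirr : ∀ j, Irreducible (p j)) (hmonic : ∀ j, (p j).Monic)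
    (hdist : Function.Injective p) (hpos : ∀ j, 1 ≤ e j)
    (hp1 : p ⟨0, hs⟩ = Polynomial.X)
    (hfact : LinearMap.charpoly (m.mul a) = ∏ j, p j ^ e j) :
    ∀ I : Submodule K A,
      (m.IsIdeal I ∧ I ≠ ⊤ ∧ ∀ J : Submodule K A, m.IsIdeal J → I < J → J = ⊤) ↔
        I = LinearMap.ker
          (Polynomial.aeval (m.mul a)
            (∏ k, p k ^ (e k - if k = ⟨0, hs⟩ then 1 else 0))) :=
  stmt15_general m a hcyc _ (by rw [hfact, ← hp1, prod_pow_sub_ite_mul p (hpos _)])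
end

section
/- Let A be a nilpotent non-abelian finite-dimensional left Leibniz algebra whose center Z(A) = {z ∈ A : zA = Az = 0} is one-dimensional. Then there is no nilpotent left Leibniz algebra N and integer i ≥ 2 such that A is isomorphic to N^i (as an ideal with its induced structure), where N^i is the i-th term of the lower central series of N. -/
open Polynomial LinearMap

/-!
If `J` is an ideal of the nilpotent algebra `N`, then so is its center `Z(J)`. When `Z(J)` is a
line, all multiplications by elements of `N` restrict to nilpotent endomorphisms of that line, so
`Z(J)` is central in `N`.

Suppose moreover that `J ⊆ N²`. Every `w ∈ J` in the second center of `N` annihilates `N²`, hence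
`J`, so `w ∈ Z(J) ⊆ Z(N)`. Descending induction along `J ∩ Nᵏ` now gives `J ⊆ Z(N)`, and `J` is
abelian.
-/

theorem eq_zero_of_isNilpotent_of_finrank_eq_one {K V : Type*} [Field K] [AddCommGroup V]
    [Module K V] (hV : Module.finrank K V = 1) {f : Module.End K V} (hf : IsNilpotent f) :
    f = 0 := by
  obtain ⟨c, rfl⟩ := (LinearMap.existsUnique_eq_smul_id_of_finrank_eq_one hV f).exists
  have : Nontrivial V := Module.nontrivial_of_finrank_eq_succ hV
  have hc : IsNilpotent (algebraMap K (Module.End K V) c) := hf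
  rw [IsNilpotent.map_iff (FaithfulSMul.algebraMap_injective K (Module.End K V))] at hc
  rw [hc.eq_zero, zero_smul]

namespace LeibnizMul

section Basic

variable {K A : Type*} [Field K] [AddCommGroup A] [Module K A] {m : LeibnizMul K A}
  {S T T' U : Submodule K A}

theorem mul_mul_eq_sub (m : LeibnizMul K A) (x y z : A) :
    m.mul (m.mul x y) z = m.mul x (m.mul y z) - m.mul y (m.mul x z) :=
  eq_sub_of_add_eq (m.leibniz x y z).symm

theorem mul_mem_mulSub {x y : A} (hx : x ∈ S) (hy : y ∈ T) : m.mul x y ∈ m.mulSub S T :=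
  Submodule.subset_span ⟨x, hx, y, hy, rfl⟩

theorem mulSub_le : m.mulSub S T ≤ U ↔ ∀ x ∈ S, ∀ y ∈ T, m.mul x y ∈ U :=
  Submodule.span_le.trans Set.image2_subset_iff

theorem mulSub_mono_right (h : T ≤ T') : m.mulSub S T ≤ m.mulSub S T' :=
  mulSub_le.2 fun _ hx _ hy => mul_mem_mulSub hx (h hy)

theorem mem_relCentralizer {z : A} :
    z ∈ m.relCentralizer S T ↔ z ∈ S ∧ ∀ x ∈ S, m.mul z x ∈ T ∧ m.mul x z ∈ T := by
  simp [relCentralizer]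

theorem mem_centerIn {z : A} :
    z ∈ m.centerIn S ↔ z ∈ S ∧ ∀ x ∈ S, m.mul z x = 0 ∧ m.mul x z = 0 := by
  simp [centerIn]

theorem mem_centerIn_top {z : A} :
    z ∈ m.centerIn ⊤ ↔ ∀ x, m.mul z x = 0 ∧ m.mul x z = 0 := by
  simp [mem_centerIn]

theorem mul_eq_zero_of_mem_relCentralizer_centerIn {w y : A}
    (hw : w ∈ m.relCentralizer S (m.centerIn S)) (hy : y ∈ m.mulSub S S) :
    m.mul w y = 0 ∧ m.mul y w = 0 := by
  have hcomm := (mem_relCentralizer.1 hw).2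
  have hle : m.mulSub S S ≤ ker (m.mul w) ⊓ ker (m.mul.flip w) := by
    refine mulSub_le.2 fun u hu v hv => ?_
    have hwu := (mem_centerIn.1 (hcomm u hu).1).2 v hv
    have hwv := (mem_centerIn.1 (hcomm v hv).1).2 u hu
    have huw := (mem_centerIn.1 (hcomm u hu).2).2 v hv
    have hvw := (mem_centerIn.1 (hcomm v hv).2).2 u hu
    simp [m.leibniz w u v, m.mul_mul_eq_sub u v w, hwu, hwv, huw, hvw]
  simpa using hle hy

end Basic

section LowerCentralSeries

variable {K A : Type*} [Field K] [AddCommGroup A] [Module K A] {m : LeibnizMul K A}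
  {S : Submodule K A}

theorem mul_mem_lcsIn {a b : ℕ} {x y : A} (hx : x ∈ m.lcsIn S a) (hy : y ∈ m.lcsIn S b) :
    m.mul x y ∈ m.lcsIn S (a + b + 1) := by
  induction a generalizing b x y with
  | zero =>
    rw [Nat.zero_add]
    exact mul_mem_mulSub hx hy
  | succ a ih =>
    suffices h : m.lcsIn S (a + 1) ≤ (m.lcsIn S (a + 1 + b + 1)).comap (m.mul.flip y) from h hx
    refine mulSub_le.2 fun u hu v hv => ?_
    have huvy : m.mul u (m.mul v y) ∈ m.lcsIn S (a + b + 1 + 1) := mul_mem_mulSub hu (ih hv hy)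
    have hvuy : m.mul v (m.mul u y) ∈ m.lcsIn S (a + (b + 1) + 1) :=
      ih hv (mul_mem_mulSub hu hy)
    rw [Submodule.mem_comap, LinearMap.flip_apply, m.mul_mul_eq_sub, Nat.add_right_comm a 1 b]
    exact sub_mem huvy hvuy

theorem mul_mem_lcsIn_top_left (x : A) {k : ℕ} {y : A} (hy : y ∈ m.lcsIn ⊤ k) :
    m.mul x y ∈ m.lcsIn ⊤ (k + 1) :=
  mul_mem_mulSub Submodule.mem_top hy

theorem mul_mem_lcsIn_top_right {k : ℕ} {x : A} (hx : x ∈ m.lcsIn ⊤ k) (y : A) :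
    m.mul x y ∈ m.lcsIn ⊤ (k + 1) :=
  mul_mem_lcsIn (b := 0) hx Submodule.mem_top

theorem IsSubalg.antitone_lcsIn (hS : m.IsSubalg S) : Antitone (m.lcsIn S) := by
  refine antitone_nat_of_succ_le fun n => ?_
  induction n with
  | zero => exact mulSub_le.2 hS
  | succ n ih => exact mulSub_mono_right ih

theorem antitone_lcsIn_top (m : LeibnizMul K A) : Antitone (m.lcsIn ⊤) :=
  IsSubalg.antitone_lcsIn fun _ _ _ _ => Submodule.mem_top

theorem isIdeal_lcsIn_top (m : LeibnizMul K A) (k : ℕ) : m.IsIdeal (m.lcsIn ⊤ k) := fun x _ hy =>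
  ⟨m.antitone_lcsIn_top k.le_succ (mul_mem_lcsIn_top_left x hy),
    m.antitone_lcsIn_top k.le_succ (mul_mem_lcsIn_top_right hy x)⟩

theorem IsNilpotent.isNilpotent_end (hm : m.IsNilpotent) {f : Module.End K A}
    (hf : ∀ k, ∀ y ∈ m.lcsIn ⊤ k, f y ∈ m.lcsIn ⊤ (k + 1)) : _root_.IsNilpotent f := by
  obtain ⟨n, hn⟩ := hm
  have hpow (k : ℕ) (y : A) : (f ^ k) y ∈ m.lcsIn ⊤ k := by
    induction k with
    | zero => exact Submodule.mem_top
    | succ k ih => simpa only [pow_succ', Module.End.mul_apply] using hf k _ ih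
  refine ⟨n, LinearMap.ext fun y => ?_⟩
  simpa only [hn, Submodule.mem_bot, LinearMap.zero_apply] using hpow n y

theorem IsNilpotent.isNilpotent_mul (hm : m.IsNilpotent) (x : A) :
    _root_.IsNilpotent (R := Module.End K A) (m.mul x) :=
  hm.isNilpotent_end fun _ _ hy => mul_mem_lcsIn_top_left x hy

theorem IsNilpotent.isNilpotent_mul_flip (hm : m.IsNilpotent) (x : A) :
    _root_.IsNilpotent (R := Module.End K A) (m.mul.flip x) :=
  hm.isNilpotent_end (f := m.mul.flip x) fun _ _ hy => mul_mem_lcsIn_top_right hy x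

end LowerCentralSeries

section Ideal

variable {K A : Type*} [Field K] [AddCommGroup A] [Module K A] {m : LeibnizMul K A}
  {J : Submodule K A}

theorem IsIdeal.centerIn (hJ : m.IsIdeal J) : m.IsIdeal (m.centerIn J) := by
  intro u z hz
  obtain ⟨hzJ, hz⟩ := mem_centerIn.1 hz
  refine ⟨mem_centerIn.2 ⟨(hJ u z hzJ).1, fun w hw => ?_⟩,
    mem_centerIn.2 ⟨(hJ u z hzJ).2, fun w hw => ?_⟩⟩ <;>
  · have huw := hz _ (hJ u w hw).1
    have hwu := hz _ (hJ u w hw).2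
    simp [m.mul_mul_eq_sub _ _ w, m.leibniz w, hz w hw, huw, hwu]

theorem IsNilpotent.le_centerIn_top_of_finrank_eq_one (hm : m.IsNilpotent) (hJ : m.IsIdeal J)
    (hdim : Module.finrank K J = 1) : J ≤ m.centerIn ⊤ := by
  have hzero {f : Module.End K A} (hf : _root_.IsNilpotent f) (hfJ : Set.MapsTo f J J) {z : A}
      (hz : z ∈ J) : f z = 0 := by
    have hres : f.restrict hfJ = 0 :=
      eq_zero_of_isNilpotent_of_finrank_eq_one hdim (Module.End.isNilpotent.restrict hfJ hf)
    exact congrArg Subtype.val (LinearMap.congr_fun hres ⟨z, hz⟩)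
  intro z hz
  exact mem_centerIn_top.2 fun x =>
    ⟨hzero (f := m.mul.flip x) (hm.isNilpotent_mul_flip x) (fun y hy => (hJ x y hy).2) hz,
      hzero (hm.isNilpotent_mul x) (fun y hy => (hJ x y hy).1) hz⟩

theorem IsNilpotent.le_centerIn_top_of_centerIn_le (hm : m.IsNilpotent) (hJ : m.IsIdeal J)
    (hJ_sq : J ≤ m.mulSub ⊤ ⊤) (hcenter : m.centerIn J ≤ m.centerIn ⊤) :
    J ≤ m.centerIn ⊤ := by
  have descend (k : ℕ) (hk : J ⊓ m.lcsIn ⊤ (k + 1) ≤ m.centerIn ⊤) :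
      J ⊓ m.lcsIn ⊤ k ≤ m.centerIn ⊤ := by
    rintro w ⟨hwJ, hwk⟩
    have hw : w ∈ m.relCentralizer ⊤ (m.centerIn ⊤) :=
      mem_relCentralizer.2 ⟨Submodule.mem_top, fun x _ =>
        ⟨hk ⟨(hJ x w hwJ).2, mul_mem_lcsIn_top_right hwk x⟩,
          hk ⟨(hJ x w hwJ).1, mul_mem_lcsIn_top_left x hwk⟩⟩⟩
    exact hcenter <| mem_centerIn.2 ⟨hwJ, fun x hx =>
      mul_eq_zero_of_mem_relCentralizer_centerIn hw (hJ_sq hx)⟩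
  obtain ⟨n, hn⟩ := hm
  have hbase : J ⊓ m.lcsIn ⊤ n ≤ m.centerIn ⊤ := by simp [hn]
  have hzero : J ⊓ m.lcsIn ⊤ 0 ≤ m.centerIn ⊤ :=
    Nat.decreasingInduction (motive := fun k _ => J ⊓ m.lcsIn ⊤ k ≤ m.centerIn ⊤)
      (fun k _ => descend k) hbase n.zero_le
  exact fun w hw => hzero ⟨hw, Submodule.mem_top⟩

end Ideal

theorem map_centerIn {K A B : Type*} [Field K] [AddCommGroup A] [Module K A] [AddCommGroup B]
    [Module K B] {mA : LeibnizMul K A} {mB : LeibnizMul K B} {e : A →ₗ[K] B}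
    (hinj : Function.Injective e) (hmul : ∀ x y, e (mA.mul x y) = mB.mul (e x) (e y))
    (S : Submodule K A) : (mA.centerIn S).map e = mB.centerIn (S.map e) := by
  ext b
  simp only [Submodule.mem_map, mem_centerIn]
  constructor
  · rintro ⟨z, ⟨hzS, hz⟩, rfl⟩
    refine ⟨⟨z, hzS, rfl⟩, ?_⟩
    rintro _ ⟨x, hx, rfl⟩
    simp only [← hmul, hz x hx, map_zero, and_self]
  · rintro ⟨⟨z, hzS, rfl⟩, hz⟩
    refine ⟨z, ⟨hzS, fun x hx => ?_⟩, rfl⟩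
    simpa only [← hmul, map_eq_zero_iff e hinj] using hz (e x) ⟨x, hx, rfl⟩

end LeibnizMul

open LeibnizMul in
theorem stmt16_general {K A N : Type*} [Field K] [AddCommGroup A] [Module K A] [AddCommGroup N]
    [Module K N] (m : LeibnizMul K A) (hnonab : m.mulSub ⊤ ⊤ ≠ ⊥)
    (hz : Module.finrank K (m.centerIn ⊤) = 1) (mN : LeibnizMul K N) (hN : mN.IsNilpotent)
    {J : Submodule K N} (hJ : mN.IsIdeal J) (hJ_sq : J ≤ mN.mulSub ⊤ ⊤) :
    ¬ ∃ e : A →ₗ[K] N, Function.Injective e ∧ LinearMap.range e = J ∧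
        ∀ x y, e (m.mul x y) = mN.mul (e x) (e y) := by
  rintro ⟨e, hinj, rfl, hmul⟩
  have hdim : Module.finrank K (mN.centerIn (range e)) = 1 := by
    rw [LinearMap.range_eq_map, ← map_centerIn hinj hmul, ← hz]
    exact (Submodule.equivMapOfInjective e hinj _).finrank_eq.symm
  have hcentral : range e ≤ mN.centerIn ⊤ :=
    hN.le_centerIn_top_of_centerIn_le hJ hJ_sq
      (hN.le_centerIn_top_of_finrank_eq_one hJ.centerIn hdim)
  refine hnonab (le_bot_iff.1 (mulSub_le.2 fun x _ y _ => hinj ?_))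
  rw [hmul, map_zero]
  exact (mem_centerIn_top.1 (hcentral (LinearMap.mem_range_self e x)) (e y)).1

/-- a nilpotent non-abelian Leibniz algebra with one-dimensional center
is not isomorphic to `N^i`, `i ≥ 2`, for any nilpotent Leibniz algebra `N`.
(`lcsIn mN ⊤ (i-1) = N^i`.) -/
theorem stmt16 {K A : Type*} [Field K] [AddCommGroup A] [Module K A] [FiniteDimensional K A]
    (m : LeibnizMul K A) (hnil : m.IsNilpotent) (hnonab : m.mulSub ⊤ ⊤ ≠ ⊥)
    (hz : Module.finrank K ↥(m.centerIn ⊤) = 1) :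
    ∀ (N : Type*) [AddCommGroup N] [Module K N] (mN : LeibnizMul K N),
      mN.IsNilpotent → ∀ i : ℕ, 2 ≤ i →
        ¬ ∃ e : A →ₗ[K] N, Function.Injective e ∧
            LinearMap.range e = mN.lcsIn ⊤ (i - 1) ∧
            ∀ x y, e (m.mul x y) = mN.mul (e x) (e y) :=
  fun _ _ _ mN hN i hi => stmt16_general m hnonab hz mN hN (mN.isIdeal_lcsIn_top (i - 1))
    (mN.antitone_lcsIn_top (by omega : 1 ≤ i - 1))
end
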